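/- Let n > 0, ν₁ ≥ 2n, ν₀ ≥ 0, v_max ≥ 0, and let b, c satisfy 0 < b ≤ v_max/(2n), 0 ≤ c ≤ v_max/n, and c²·n² ≤ b²·(ν₁² − 4n²). Let γ(t) = (b·sin(nt + ν), 2b·cos(nt + ν), c·sin(nt + ψ)) for arbitrary phases ν, ψ ∈ ℝ. Then for all t ∈ ℝ the state (γ(t), γ'(t)) lies in the allowable set, i.e., all four safety constraints hold: √(γ₁'² + γ₂'² + γ₃'²) ≤ ν₀ + ν₁·√(γ₁² + γ₂² + γ₃²), and |γ₁'(t)| ≤ v_max, |γ₂'(t)| ≤ v_max, |γ₃'(t)| ≤ v_max. -/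

import Mathlib

/-!
The in-plane ellipse has semi-minor axis `b`, so the distance to the origin never drops below `b`.
The speed never exceeds `n * √(4 * b ^ 2 + c ^ 2)`, its value if both the in-plane and the
out-of-plane motion were at their fastest simultaneously. The constraint on `c` says exactly that
this upper bound on the speed is at most `ν₁ * b`.
-/

section Harmonic

variable (a ω φ t : ℝ)

lemma deriv_const_mul_sin_mul_add :
    deriv (fun t => a * Real.sin (ω * t + φ)) t = a * ω * Real.cos (ω * t + φ) := by
  have phase : HasDerivAt (fun t => ω * t + φ) ω t := (hasDerivAt_const_mul ω).add_const φ
  rw [(phase.sin.const_mul a).deriv]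
  ring

lemma deriv_const_mul_cos_mul_add :
    deriv (fun t => a * Real.cos (ω * t + φ)) t = -(a * ω * Real.sin (ω * t + φ)) := by
  have phase : HasDerivAt (fun t => ω * t + φ) ω t := (hasDerivAt_const_mul ω).add_const φ
  rw [(phase.cos.const_mul a).deriv]
  ring

lemma abs_deriv_const_mul_sin_mul_add_le :
    |deriv (fun t => a * Real.sin (ω * t + φ)) t| ≤ |a * ω| := by
  rw [deriv_const_mul_sin_mul_add, abs_mul]
  exact mul_le_of_le_one_right (abs_nonneg _) (Real.abs_cos_le_one _)

lemma abs_deriv_const_mul_cos_mul_add_le :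
    |deriv (fun t => a * Real.cos (ω * t + φ)) t| ≤ |a * ω| := by
  rw [deriv_const_mul_cos_mul_add, abs_neg, abs_mul]
  exact mul_le_of_le_one_right (abs_nonneg _) (Real.abs_sin_le_one _)

end Harmonic

section Ellipse

variable {p q : ℝ}

lemma sq_le_mul_sin_sq_add_mul_cos_sq (hpq : p ^ 2 ≤ q ^ 2) (θ : ℝ) :
    p ^ 2 ≤ (p * Real.sin θ) ^ 2 + (q * Real.cos θ) ^ 2 :=
  calc
    p ^ 2 = p ^ 2 * Real.sin θ ^ 2 + p ^ 2 * Real.cos θ ^ 2 := by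
      rw [← mul_add, Real.sin_sq_add_cos_sq, mul_one]
    _ ≤ p ^ 2 * Real.sin θ ^ 2 + q ^ 2 * Real.cos θ ^ 2 := by gcongr
    _ = (p * Real.sin θ) ^ 2 + (q * Real.cos θ) ^ 2 := by ring

lemma mul_cos_sq_add_mul_sin_sq_le_sq (hpq : p ^ 2 ≤ q ^ 2) (θ : ℝ) :
    (p * Real.cos θ) ^ 2 + (q * Real.sin θ) ^ 2 ≤ q ^ 2 :=
  calc
    (p * Real.cos θ) ^ 2 + (q * Real.sin θ) ^ 2
      = p ^ 2 * Real.cos θ ^ 2 + q ^ 2 * Real.sin θ ^ 2 := by ring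
    _ ≤ q ^ 2 * Real.cos θ ^ 2 + q ^ 2 * Real.sin θ ^ 2 := by gcongr
    _ = q ^ 2 := by rw [← mul_add, Real.cos_sq_add_sin_sq, mul_one]

end Ellipse

section EllipticMotion

/-- The distance to the origin at time `t` along the motion
`(p * sin (ω * t + φ), q * cos (ω * t + φ), c * sin (ω * t + ψ))`. An elliptical natural motion
trajectory is the case `p = b`, `q = 2 * b`, `ω = n`. -/
noncomputable def ellipticDistance (p q c ω φ ψ t : ℝ) : ℝ :=
  √((p * Real.sin (ω * t + φ)) ^ 2 + (q * Real.cos (ω * t + φ)) ^ 2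
    + (c * Real.sin (ω * t + ψ)) ^ 2)

/-- The Euclidean norm of the velocity at time `t` of the motion whose distance to the origin is
`ellipticDistance p q c ω φ ψ`. -/
noncomputable def ellipticSpeed (p q c ω φ ψ t : ℝ) : ℝ :=
  √(deriv (fun t => p * Real.sin (ω * t + φ)) t ^ 2
    + deriv (fun t => q * Real.cos (ω * t + φ)) t ^ 2
    + deriv (fun t => c * Real.sin (ω * t + ψ)) t ^ 2)

variable {p q : ℝ}

lemma abs_le_ellipticDistance (hpq : p ^ 2 ≤ q ^ 2) (c ω φ ψ t : ℝ) :
    |p| ≤ ellipticDistance p q c ω φ ψ t :=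
  Real.abs_le_sqrt <|
    (sq_le_mul_sin_sq_add_mul_cos_sq hpq _).trans (le_add_of_nonneg_right (sq_nonneg _))

lemma ellipticSpeed_le (hpq : p ^ 2 ≤ q ^ 2) (c ω φ ψ t : ℝ) :
    ellipticSpeed p q c ω φ ψ t ≤ √((q * ω) ^ 2 + (c * ω) ^ 2) := by
  have in_plane : deriv (fun t => p * Real.sin (ω * t + φ)) t ^ 2
      + deriv (fun t => q * Real.cos (ω * t + φ)) t ^ 2 ≤ (q * ω) ^ 2 := by
    rw [deriv_const_mul_sin_mul_add, deriv_const_mul_cos_mul_add, neg_sq]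
    refine mul_cos_sq_add_mul_sin_sq_le_sq ?_ _
    rw [mul_pow, mul_pow]
    gcongr
  have out_of_plane : deriv (fun t => c * Real.sin (ω * t + ψ)) t ^ 2 ≤ (c * ω) ^ 2 :=
    sq_le_sq.2 (abs_deriv_const_mul_sin_mul_add_le c ω ψ t)
  exact Real.sqrt_le_sqrt (add_le_add in_plane out_of_plane)

lemma ellipticSpeed_le_mul_ellipticDistance {c ω k : ℝ} (hpq : p ^ 2 ≤ q ^ 2) (hk : 0 ≤ k)
    (hc : (q * ω) ^ 2 + (c * ω) ^ 2 ≤ (k * p) ^ 2) (φ ψ t : ℝ) :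
    ellipticSpeed p q c ω φ ψ t ≤ k * ellipticDistance p q c ω φ ψ t :=
  calc
    ellipticSpeed p q c ω φ ψ t ≤ √((q * ω) ^ 2 + (c * ω) ^ 2) :=
      ellipticSpeed_le hpq c ω φ ψ t
    _ ≤ √((k * p) ^ 2) := Real.sqrt_le_sqrt hc
    _ = k * |p| := by rw [Real.sqrt_sq_eq_abs, abs_mul, abs_of_nonneg hk]
    _ ≤ k * ellipticDistance p q c ω φ ψ t := by
      gcongr
      exact abs_le_ellipticDistance hpq c ω φ ψ t

end EllipticMotion

/-- Combined conclusion of Lemma 3: the states of an elliptical NMT whose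
parameters satisfy the given constraints lie in the allowable set, i.e.,
all four safety constraints hold for all time. -/
theorem nmt_in_allowable_set
    (n ν₀ ν₁ vmax b c ν ψ : ℝ) (hn : 0 < n) (hν₁ : ν₁ ≥ 2 * n) (hν₀ : 0 ≤ ν₀)
    (hvmax : 0 ≤ vmax)
    (hb0 : 0 < b) (hb : b ≤ vmax / (2 * n))
    (hc0 : 0 ≤ c) (hc : c ≤ vmax / n)
    (hcb : c ^ 2 * n ^ 2 ≤ b ^ 2 * (ν₁ ^ 2 - 4 * n ^ 2))
    (γ₁ γ₂ γ₃ : ℝ → ℝ)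
    (hγ₁ : γ₁ = fun t => b * Real.sin (n * t + ν))
    (hγ₂ : γ₂ = fun t => 2 * b * Real.cos (n * t + ν))
    (hγ₃ : γ₃ = fun t => c * Real.sin (n * t + ψ)) :
    ∀ t : ℝ,
      Real.sqrt (deriv γ₁ t ^ 2 + deriv γ₂ t ^ 2 + deriv γ₃ t ^ 2) ≤
          ν₀ + ν₁ * Real.sqrt (γ₁ t ^ 2 + γ₂ t ^ 2 + γ₃ t ^ 2) ∧
        |deriv γ₁ t| ≤ vmax ∧ |deriv γ₂ t| ≤ vmax ∧ |deriv γ₃ t| ≤ vmax := by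
  intro t
  subst hγ₁ hγ₂ hγ₃
  have axes : b ^ 2 ≤ (2 * b) ^ 2 := by gcongr; linarith
  have speed_coeff : (2 * b * n) ^ 2 + (c * n) ^ 2 ≤ (ν₁ * b) ^ 2 := by linarith
  have speed : ellipticSpeed b (2 * b) c n ν ψ t ≤ ν₁ * ellipticDistance b (2 * b) c n ν ψ t :=
    ellipticSpeed_le_mul_ellipticDistance axes (by linarith) speed_coeff ν ψ t
  have two_bn_le : |2 * b * n| ≤ vmax := by
    rw [abs_of_pos (by positivity)]
    linarith [(le_div_iff₀ (by positivity)).1 hb]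
  have bn_le : |b * n| ≤ vmax := le_trans (by gcongr; linarith) two_bn_le
  have cn_le : |c * n| ≤ vmax := by
    rw [abs_of_nonneg (by positivity)]
    exact (le_div_iff₀ hn).1 hc
  exact ⟨speed.trans (le_add_of_nonneg_left hν₀),
    (abs_deriv_const_mul_sin_mul_add_le ..).trans bn_le,
    (abs_deriv_const_mul_cos_mul_add_le ..).trans two_bn_le,
    (abs_deriv_const_mul_sin_mul_add_le ..).trans cn_le⟩
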